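/- Let C be a meet cover space and λ : C → C a positively expansive cofinal morphism. Then there exists β ∈ C such that: (1) λ^{n+1}β ≺ λ^n β for every n ∈ ℕ, and (2) for every γ ∈ C there exists n ∈ ℕ with λ^n β ≺ γ. -/

import Mathlib

open Filter ENNReal Topology

/-- A *cover space*: a pre-ordered semigroup `(C, ≺, ∧)` satisfying (C1) and (C2). -/
structure CoverSpace (C : Type*) where
  prec : C → C → Prop
  meet : C → C → C
  prec_refl : ∀ a, prec a a
  prec_trans : ∀ a b c, prec a b → prec b c → prec a c
  meet_assoc : ∀ a b c, meet (meet a b) c = meet a (meet b c)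
  c1_left : ∀ a b, prec (meet a b) a
  c1_right : ∀ a b, prec (meet a b) b
  c2 : ∀ a a' b b', prec a a' → prec b b' → prec (meet a b) (meet a' b')

variable {C : Type*}

/-- `α_0^n[λ] = α ∧ λα ∧ ⋯ ∧ λ^n α` (a product of `n + 1` factors). -/
def CoverSpace.orbitProd (E : CoverSpace C) (l : C → C) (a : C) : ℕ → C
  | 0 => a
  | n + 1 => E.meet (E.orbitProd l a n) (l^[n + 1] a)

/-! With `α` a positive generator and `λδ ≺ α`, take `β = α ∧ λα ∧ ⋯ ∧ λ^m α` for an `m` with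
`β ≺ δ`. Each factor of `β` dominates `λβ`: the first since `λβ ≺ λδ ≺ α`, the others since
`β ≺ λ^j α` gives `λβ ≺ λ^(j+1) α`. So `λβ ≺ β`, and the iterates of `β` decrease. As `β ≺ α`, the
iterate `λ^n β` lies below `λ^j α` for every `j ≤ n`, hence below `α ∧ λα ∧ ⋯ ∧ λ^n α`, which
refines any prescribed cover once `n` is large. -/

namespace CoverSpace

variable {E : CoverSpace C} {l : C → C} {a b c : C} {m n : ℕ}

/-- The refinement preorder `≺` of a cover space as a Mathlib `Preorder`. It is not an instance,
since a type may carry several cover space structures. -/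
abbrev toPreorder (E : CoverSpace C) : Preorder C where
  le := E.prec
  le_refl := E.prec_refl
  le_trans := E.prec_trans

/-- A *meet cover space*: `a ∧ b`, a lower bound of `{a, b}` by (C1), is a greatest one. -/
def IsMeet (E : CoverSpace C) : Prop :=
  ∀ a b c, E.prec c a → E.prec c b → E.prec c (E.meet a b)

/-- A *positive generator* for `l`: a cover whose finite orbit products `a ∧ la ∧ ⋯ ∧ l^m a`
refine every cover. Positive expansiveness of `l` is the existence of such an `a`. -/
def IsPositiveGenerator (E : CoverSpace C) (l : C → C) (a : C) : Prop :=
  ∀ b, ∃ m, E.prec (E.orbitProd l a m) b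

theorem orbitProd_prec_iterate (E : CoverSpace C) (l : C → C) (a : C) (h : m ≤ n) :
    E.prec (E.orbitProd l a n) (l^[m] a) := by
  induction n, h using Nat.le_induction with
  | base =>
    cases m with
    | zero => exact E.prec_refl a
    | succ m => exact E.c1_right _ _
  | succ n _ ih => exact E.prec_trans _ _ _ (E.c1_left _ _) ih

theorem IsMeet.prec_orbitProd (hE : E.IsMeet) (h : ∀ j ≤ n, E.prec c (l^[j] a)) :
    E.prec c (E.orbitProd l a n) := by
  induction n with
  | zero => exact h 0 le_rfl
  | succ n ih =>
    exact hE _ _ _ (ih fun j hj => h j (Nat.le_succ_of_le hj)) (h (n + 1) le_rfl)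

theorem IsMeet.map_orbitProd_prec_orbitProd (hE : E.IsMeet)
    (hl : ∀ a b, E.prec a b → E.prec (l a) (l b)) (h : E.prec (l (E.orbitProd l a n)) a) :
    E.prec (l (E.orbitProd l a n)) (E.orbitProd l a n) := by
  refine hE.prec_orbitProd fun j hj => ?_
  cases j with
  | zero => exact h
  | succ j =>
    rw [Function.iterate_succ_apply']
    exact hl _ _ (E.orbitProd_prec_iterate l a (Nat.le_of_succ_le hj))

theorem iterate_prec_iterate_of_le (hl : ∀ a b, E.prec a b → E.prec (l a) (l b))
    (hb : E.prec (l b) b) (h : m ≤ n) : E.prec (l^[n] b) (l^[m] b) :=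
  letI := E.toPreorder
  Monotone.antitone_iterate_of_map_le hl hb h

theorem iterate_prec_iterate (hl : ∀ a b, E.prec a b → E.prec (l a) (l b)) (h : E.prec a b)
    (n : ℕ) : E.prec (l^[n] a) (l^[n] b) :=
  letI := E.toPreorder
  Monotone.iterate hl n h

theorem IsMeet.iterate_prec_orbitProd (hE : E.IsMeet)
    (hl : ∀ a b, E.prec a b → E.prec (l a) (l b)) (hb : E.prec (l b) b) (hba : E.prec b a)
    (n : ℕ) : E.prec (l^[n] b) (E.orbitProd l a n) :=
  hE.prec_orbitProd fun j hj =>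
    E.prec_trans _ _ _ (iterate_prec_iterate_of_le hl hb hj) (iterate_prec_iterate hl hba j)

end CoverSpace

theorem stmt_12_general {E : CoverSpace C} (hE : E.IsMeet) {l : C → C}
    (hl : ∀ a b, E.prec a b → E.prec (l a) (l b)) {α : C} (hα : E.IsPositiveGenerator l α)
    (hlα : ∃ δ, E.prec (l δ) α) :
    ∃ β : C, (∀ n : ℕ, E.prec (l^[n + 1] β) (l^[n] β)) ∧
      (∀ γ : C, ∃ n : ℕ, E.prec (l^[n] β) γ) := by
  obtain ⟨δ, hδ⟩ := hlα
  obtain ⟨m, hm⟩ := hα δ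
  have map_prec_α : E.prec (l (E.orbitProd l α m)) α := E.prec_trans _ _ _ (hl _ _ hm) hδ
  have map_prec_self := hE.map_orbitProd_prec_orbitProd hl map_prec_α
  have prec_α : E.prec (E.orbitProd l α m) α := E.orbitProd_prec_iterate l α m.zero_le
  refine ⟨E.orbitProd l α m,
    fun n => CoverSpace.iterate_prec_iterate_of_le hl map_prec_self n.le_succ, fun γ => ?_⟩
  obtain ⟨n, hn⟩ := hα γ
  exact ⟨n, E.prec_trans _ _ _ (hE.iterate_prec_orbitProd hl map_prec_self prec_α n) hn⟩

/-- If `C` is a meet cover space and `λ` a positively expansive cofinal morphism, then there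
is `β ∈ C` with `λ^{n+1}β ≺ λ^n β` for all `n`, whose iterates `λ^n β` are cofinal in `C`. -/
theorem stmt_12 (E : CoverSpace C)
    (hmeet : ∀ a b c, E.prec c a → E.prec c b → E.prec c (E.meet a b))
    (l : C → C)
    (hmono : ∀ a b, E.prec a b → E.prec (l a) (l b))
    (hm1 : ∀ a b, E.prec (l (E.meet a b)) (E.meet (l a) (l b)) ∧
      E.prec (E.meet (l a) (l b)) (l (E.meet a b)))
    (hcof : ∀ a : C, ∃ b : C, E.prec (l b) a)
    (hexp : ∃ α : C, ∀ b : C, ∃ m : ℕ, E.prec (E.orbitProd l α m) b) :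
    ∃ β : C, (∀ n : ℕ, E.prec (l^[n + 1] β) (l^[n] β)) ∧
      (∀ γ : C, ∃ n : ℕ, E.prec (l^[n] β) γ) := by
  obtain ⟨α, hα⟩ := hexp
  exact stmt_12_general hmeet hmono hα (hcof α)
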